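/- arXiv:2107.13610 — 2 statements merged into one kernel-verified Lean document; each statement's English description precedes it below -/
import Mathlib

section
/- Let m ≥ 1, let σ_η := ∫_{B_m(0,1)} y₁² dy, let η : [0,∞) → ℝ be given by η(t) = 1 for 0 ≤ t ≤ 1 and η(t) = 0 for t > 1, and let ψ(t) := (1/σ_η) ∫_t^∞ η(s)·s ds. Then for all real numbers 0 < r₂ < r₁, r₁² · ∫_{B_m(0,r₁)} ψ(|v|/r₁) dv − r₂² · ∫_{B_m(0,r₂)} ψ(|v|/r₂) dv = r₁^{m+2} − r₂^{m+2}. -/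
open MeasureTheory

lemma aux_radial (m : ℕ) (hm : 0 < m) (g : ℝ → ℝ) :
    ∫ v in Metric.ball (0 : EuclideanSpace ℝ (Fin m)) 1, g ‖v‖ =
      m * (volume.real (Metric.ball (0 : EuclideanSpace ℝ (Fin m)) 1) *
        ∫ y in (0:ℝ)..1, y ^ (m - 1) * g y) := by
  haveI : Nonempty (Fin m) := ⟨⟨0, hm⟩⟩
  have h := integral_fun_norm_addHaar (volume : Measure (EuclideanSpace ℝ (Fin m)))
    ((Set.Iio (1:ℝ)).indicator g)
  rw [← integral_indicator Metric.isOpen_ball.measurableSet]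
  have e : (fun v : EuclideanSpace ℝ (Fin m) => (Set.Iio (1:ℝ)).indicator g ‖v‖) =
      (Metric.ball (0 : EuclideanSpace ℝ (Fin m)) 1).indicator (fun v => g ‖v‖) := by
    funext v
    simp [Set.indicator]
  rw [← e, h]
  simp only [finrank_euclideanSpace, Fintype.card_fin, nsmul_eq_mul, smul_eq_mul]
  congr 2
  rw [intervalIntegral.integral_of_le zero_le_one, integral_Ioc_eq_integral_Ioo]
  have e2 : (fun y : ℝ => y ^ (m - 1) * (Set.Iio (1:ℝ)).indicator g y) =
      (Set.Iio (1:ℝ)).indicator (fun y => y ^ (m - 1) * g y) := by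
    funext v
    simp [Set.indicator]
  rw [e2, setIntegral_indicator measurableSet_Iio]
  rfl

lemma aux_symm (m : ℕ) (i j : Fin m) :
    ∫ y in Metric.ball (0 : EuclideanSpace ℝ (Fin m)) 1, (y i) ^ 2 =
    ∫ y in Metric.ball (0 : EuclideanSpace ℝ (Fin m)) 1, (y j) ^ 2 := by
  let e := LinearIsometryEquiv.piLpCongrLeft 2 ℝ ℝ (Equiv.swap i j)
  have h := (e.measurePreserving).setIntegral_preimage_emb
    e.toHomeomorph.measurableEmbedding (fun y : EuclideanSpace ℝ (Fin m) => (y i) ^ 2)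
    (Metric.ball 0 1)
  rw [← h]
  have hb : e ⁻¹' (Metric.ball 0 1) = Metric.ball 0 1 := by
    ext x; simp
  rw [hb]
  congr 1
  funext x
  simp [e, LinearIsometryEquiv.piLpCongrLeft_apply, Equiv.piCongrLeft'_apply]

lemma aux_int (m : ℕ) (i : Fin m) :
    IntegrableOn (fun y : EuclideanSpace ℝ (Fin m) => (y i) ^ 2) (Metric.ball 0 1) := by
  refine IntegrableOn.mono_set (t := Metric.closedBall 0 1) ?_ Metric.ball_subset_closedBall
  exact ContinuousOn.integrableOn_compact (isCompact_closedBall _ _) (by fun_prop)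

lemma aux_sigma (m : ℕ) (hm : 0 < m) :
    (m + 2) * ∫ y in Metric.ball (0 : EuclideanSpace ℝ (Fin m)) 1, (y ⟨0, hm⟩) ^ 2 =
      volume.real (Metric.ball (0 : EuclideanSpace ℝ (Fin m)) 1) := by
  have h1 : ∫ y in Metric.ball (0 : EuclideanSpace ℝ (Fin m)) 1, ‖y‖ ^ 2 =
      m * ∫ y in Metric.ball (0 : EuclideanSpace ℝ (Fin m)) 1, (y ⟨0, hm⟩) ^ 2 := by
    simp_rw [EuclideanSpace.real_norm_sq_eq]
    rw [integral_finsetSum _ (fun i _ => aux_int m i)]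
    rw [Finset.sum_congr rfl (fun i _ => aux_symm m i ⟨0, hm⟩)]
    simp
  rw [aux_radial m hm (fun t => t ^ 2)] at h1
  obtain ⟨k, rfl⟩ : ∃ k, m = k + 1 := ⟨m - 1, by omega⟩
  simp only [Nat.add_sub_cancel, ← pow_add, integral_pow] at h1
  have hk : ((k + 1 : ℕ) : ℝ) ≠ 0 := by positivity
  have h2 := mul_left_cancel₀ hk h1
  rw [← h2]
  push_cast
  have : (k : ℝ) + 1 + 2 ≠ 0 := by positivity
  simp
  field_simp
  ring

lemma aux_scale (m : ℕ) (ψ : ℝ → ℝ) (r : ℝ) (hr : 0 < r) :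
    ∫ v in Metric.ball (0 : EuclideanSpace ℝ (Fin m)) r, ψ (‖v‖ / r) =
      r ^ m * ∫ v in Metric.ball (0 : EuclideanSpace ℝ (Fin m)) 1, ψ ‖v‖ := by
  rw [← integral_indicator Metric.isOpen_ball.measurableSet,
    ← integral_indicator Metric.isOpen_ball.measurableSet]
  have h := Measure.integral_comp_inv_smul_of_nonneg
    (volume : Measure (EuclideanSpace ℝ (Fin m)))
    ((Metric.ball (0 : EuclideanSpace ℝ (Fin m)) 1).indicator (fun v => ψ ‖v‖)) hr.le
  simp only [finrank_euclideanSpace, Fintype.card_fin, smul_eq_mul] at h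
  rw [← h]
  congr 1
  funext v
  have e : ‖r⁻¹ • v‖ = ‖v‖ / r := by
    rw [norm_smul, norm_inv, Real.norm_of_nonneg hr.le]; field_simp
  simp only [Set.indicator, mem_ball_zero_iff, e, div_lt_one hr]

lemma aux_eta (η : ℝ → ℝ) (hη1 : ∀ t, 0 ≤ t → t ≤ 1 → η t = 1) (hη0 : ∀ t, 1 < t → η t = 0)
    (t : ℝ) (h0 : 0 ≤ t) (h1 : t ≤ 1) : ∫ s in Set.Ioi t, η s * s = (1 - t ^ 2) / 2 := by
  rw [setIntegral_eq_of_subset_of_forall_diff_eq_zero (s := Set.Ioc t 1) measurableSet_Ioi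
    Set.Ioc_subset_Ioi_self]
  · rw [setIntegral_congr_fun (g := fun s => s) measurableSet_Ioc,
      ← intervalIntegral.integral_of_le h1, integral_id]
    · norm_num
    · intro s hs
      simp [hη1 s (h0.trans hs.1.le) hs.2]
  · intro s hs
    have : 1 < s := by
      by_contra h
      exact hs.2 ⟨hs.1, not_lt.1 h⟩
    simp [hη0 s this]

/-- The claim in the proof of Lemma A.3: the normalization constant `C_α` of the annular
smoothing kernel equals `1` in the flat case, i.e.
`r₁² ∫_{B(0,r₁)} ψ(|v|/r₁) dv − r₂² ∫_{B(0,r₂)} ψ(|v|/r₂) dv = r₁^{m+2} − r₂^{m+2}`,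
where `ψ(t) = (1/σ_η) ∫_t^∞ η(s) s ds` and `η` is the indicator of `[0,1]`. -/
theorem annular_kernel_normalization (m : ℕ) (hm : 0 < m)
    (ση : ℝ)
    (hσ : ση = ∫ y in Metric.ball (0 : EuclideanSpace ℝ (Fin m)) 1, (y ⟨0, hm⟩) ^ 2)
    (η : ℝ → ℝ) (hη1 : ∀ t, 0 ≤ t → t ≤ 1 → η t = 1) (hη0 : ∀ t, 1 < t → η t = 0)
    (ψ : ℝ → ℝ) (hψ : ∀ t, ψ t = (1 / ση) * ∫ s in Set.Ioi t, η s * s)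
    (r₁ r₂ : ℝ) (h2 : 0 < r₂) (h12 : r₂ < r₁) :
    r₁ ^ 2 * (∫ v in Metric.ball (0 : EuclideanSpace ℝ (Fin m)) r₁, ψ (‖v‖ / r₁)) -
      r₂ ^ 2 * (∫ v in Metric.ball (0 : EuclideanSpace ℝ (Fin m)) r₂, ψ (‖v‖ / r₂)) =
      r₁ ^ (m + 2) - r₂ ^ (m + 2) := by
  have hs := aux_sigma m hm
  rw [← hσ] at hs
  have hV : 0 < volume.real (Metric.ball (0 : EuclideanSpace ℝ (Fin m)) 1) :=
    ENNReal.toReal_pos (Metric.measure_ball_pos _ _ one_pos).ne' measure_ball_lt_top.ne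
  have hσ0 : ση ≠ 0 := by
    rintro rfl
    simp at hs
    linarith
  have key : ∫ v in Metric.ball (0 : EuclideanSpace ℝ (Fin m)) 1, ψ ‖v‖ = 1 := by
    rw [aux_radial m hm ψ, ← hs]
    have : ∫ y in (0:ℝ)..1, y ^ (m - 1) * ψ y =
        ∫ y in (0:ℝ)..1, (1 / (2 * ση)) * (y ^ (m - 1) - y ^ (m + 1)) := by
      apply intervalIntegral.integral_congr
      intro y hy
      rw [Set.uIcc_of_le zero_le_one] at hy
      obtain ⟨k, rfl⟩ : ∃ k, m = k + 1 := ⟨m - 1, by omega⟩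
      simp only [hψ, aux_eta η hη1 hη0 y hy.1 hy.2, Nat.add_sub_cancel]
      field_simp
      ring
    rw [this, intervalIntegral.integral_const_mul, intervalIntegral.integral_sub
      (Continuous.intervalIntegrable (by fun_prop) _ _)
      (Continuous.intervalIntegrable (by fun_prop) _ _), integral_pow, integral_pow]
    obtain ⟨k, rfl⟩ : ∃ k, m = k + 1 := ⟨m - 1, by omega⟩
    have a1 : (k : ℝ) + 1 ≠ 0 := by positivity
    have a2 : (k : ℝ) + 1 + 2 ≠ 0 := by positivity
    have a3 : (k : ℝ) + 1 + 1 + 1 ≠ 0 := by positivity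
    simp only [Nat.add_sub_cancel]
    push_cast
    simp
    field_simp
    ring
  rw [aux_scale m ψ r₁ (h2.trans h12), aux_scale m ψ r₂ h2, key]
  ring
end

section
/- Let E be a finite-dimensional real inner product space and V a linear subspace of E. Let α ∈ (0, π/2) and let r, ε be real numbers with 0 < r < ε·cos(α). Let y ∈ E and x, y₁ ∈ V be such that ‖x − y‖ ≥ ε, 0 < ‖y₁ − y‖ ≤ r, and the angle between x − y and y₁ − y is strictly less than α. Then dist(y, V) < r·ε·sin(α)/(ε·cos(α) − r). -/
open Real InnerProductGeometry

/-- The quantitative core of Lemma 3.7 (flat case): if `x, y₁ ∈ V`, `‖x − y‖ ≥ ε`,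
`0 < ‖y₁ − y‖ ≤ r`, and the angle between `x − y` and `y₁ − y` is less than `α`, where
`0 < r < ε·cos(α)`, then `dist(y, V) < r·ε·sin(α)/(ε·cos(α) − r)`. -/
theorem first_step_in_flat_bound {E : Type*} [NormedAddCommGroup E]
    [InnerProductSpace ℝ E] [FiniteDimensional ℝ E]
    (V : Submodule ℝ E)
    (α : ℝ) (hα0 : 0 < α) (hα : α < π / 2)
    (r ε : ℝ) (hr : 0 < r) (hrε : r < ε * Real.cos α)
    (y : E) (x y₁ : E) (hx : x ∈ V) (hy₁ : y₁ ∈ V)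
    (hxy : ‖x - y‖ ≥ ε) (hy₁y0 : 0 < ‖y₁ - y‖) (hy₁yr : ‖y₁ - y‖ ≤ r)
    (hangle : InnerProductGeometry.angle (x - y) (y₁ - y) < α) :
    Metric.infDist y (V : Set E) < r * ε * Real.sin α / (ε * Real.cos α - r) := by
  have hcα : 0 < Real.cos α := Real.cos_pos_of_mem_Ioo ⟨by linarith, hα⟩
  have hε : 0 < ε := by
    by_contra h
    nlinarith
  have hd0 : 0 ≤ Metric.infDist y (V : Set E) := Metric.infDist_nonneg
  have hline : ∀ t : ℝ, Metric.infDist y (V : Set E) ≤ ‖(y₁ - y) + t • ((x - y) - (y₁ - y))‖ := by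
    intro t
    have hm : y₁ + t • (x - y₁) ∈ (V : Set E) :=
      V.add_mem hy₁ (V.smul_mem t (V.sub_mem hx hy₁))
    have h := Metric.infDist_le_dist_of_mem (x := y) hm
    rw [dist_comm, dist_eq_norm] at h
    have e : y₁ + t • (x - y₁) - y = (y₁ - y) + t • ((x - y) - (y₁ - y)) := by
      rw [sub_sub_sub_cancel_right]; abel
    rwa [e] at h
  have hθ0 := InnerProductGeometry.angle_nonneg (x - y) (y₁ - y)
  have hin := InnerProductGeometry.cos_angle_mul_norm_mul_norm (x - y) (y₁ - y)
  generalize Metric.infDist y (V : Set E) = d at *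
  generalize InnerProductGeometry.angle (x - y) (y₁ - y) = θ at *
  generalize x - y = a at *
  generalize y₁ - y = b at *
  have hcos : Real.cos α < Real.cos θ := Real.cos_lt_cos_of_nonneg_of_le_pi_div_two hθ0 hα.le hangle
  have hsin : Real.sin θ < Real.sin α :=
    Real.sin_lt_sin_of_lt_of_le_pi_div_two (by linarith) hα.le hangle
  have hsθ : 0 ≤ Real.sin θ := Real.sin_nonneg_of_nonneg_of_le_pi hθ0 (by linarith [Real.pi_pos])
  have hsc := Real.sin_sq_add_cos_sq θ
  have hL : 0 < ‖a‖ := by linarith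
  have hpos : 0 < ‖a‖ * Real.cos θ - ‖b‖ := by
    have : ε * Real.cos α ≤ ‖a‖ * Real.cos θ := mul_le_mul hxy hcos.le hcα.le hL.le
    linarith
  have hN : ‖a - b‖ ^ 2 = ‖a‖ ^ 2 - 2 * (Real.cos θ * (‖a‖ * ‖b‖)) + ‖b‖ ^ 2 := by
    rw [norm_sub_sq_real, hin]
  have hNlow : (‖a‖ * Real.cos θ - ‖b‖) ^ 2 ≤ ‖a - b‖ ^ 2 := by
    rw [hN]; nlinarith [sq_nonneg (‖a‖ * Real.sin θ)]
  have hNpos : 0 < ‖a - b‖ ^ 2 := lt_of_lt_of_le (by positivity) hNlow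
  have hbc : inner ℝ b (a - b) = Real.cos θ * (‖a‖ * ‖b‖) - ‖b‖ ^ 2 := by
    rw [inner_sub_right, real_inner_self_eq_norm_sq, real_inner_comm, hin]
  have hd2 : d ^ 2 * ‖a - b‖ ^ 2 ≤ (‖a‖ * ‖b‖ * Real.sin θ) ^ 2 := by
    have h1 := hline (-(inner ℝ b (a - b)) / ‖a - b‖ ^ 2)
    have h2 := pow_le_pow_left₀ hd0 h1 2
    rw [norm_add_sq_real, inner_smul_right, norm_smul, mul_pow, Real.norm_eq_abs, sq_abs] at h2
    have h3 := mul_le_mul_of_nonneg_right h2 hNpos.le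
    refine h3.trans (le_of_eq ?_)
    have h4 : ∀ N q S : ℝ, 0 < N → (S + 2 * (-q / N * q) + (-q / N) ^ 2 * N) * N = S * N - q ^ 2 := by
      intro N q S hN
      field_simp
      ring
    rw [h4 _ _ _ hNpos, hbc, hN]
    linear_combination (-(‖a‖ * ‖b‖) ^ 2) * hsc
  have hkey : d * (‖a‖ * Real.cos θ - ‖b‖) ≤ ‖a‖ * ‖b‖ * Real.sin θ := by
    refine (fun h h0 => abs_le_of_sq_le_sq' h h0 |>.2) ?_ (by positivity)
    rw [mul_pow]
    exact (mul_le_mul_of_nonneg_left hNlow (sq_nonneg d)).trans hd2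
  have hcmp : ‖a‖ * (d * (ε * Real.cos α - r)) ≤ ε * (d * (‖a‖ * Real.cos θ - ‖b‖)) := by
    have h1 : ε * ‖b‖ ≤ ‖a‖ * r := mul_le_mul hxy hy₁yr hy₁y0.le hL.le
    have h2 : ε * ‖a‖ * Real.cos α ≤ ε * ‖a‖ * Real.cos θ :=
      mul_le_mul_of_nonneg_left hcos.le (by positivity)
    have h3 : 0 ≤ d * ((ε * ‖a‖ * Real.cos θ - ε * ‖a‖ * Real.cos α) + (‖a‖ * r - ε * ‖b‖)) :=
      mul_nonneg hd0 (by linarith)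
    linarith
  have hfin : ‖b‖ * Real.sin θ < r * Real.sin α :=
    mul_lt_mul' hy₁yr hsin hsθ hr
  rw [lt_div_iff₀ (by linarith)]
  have h5 : ‖a‖ * (d * (ε * Real.cos α - r)) < ‖a‖ * (r * ε * Real.sin α) := by
    have h6 := mul_le_mul_of_nonneg_left hkey hε.le
    have h7 := mul_lt_mul_of_pos_left hfin (mul_pos hε hL)
    linarith
  exact lt_of_mul_lt_mul_left h5 hL.le
end
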